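/- arXiv:1507.08237 — 2 statements merged into one kernel-verified Lean document; each statement's English description precedes it below -/
import Mathlib

section
/- (Theorem 6.1.) Let $\kappa_1>1$ and $0<\kappa_2<1$ with $\kappa_1\kappa_2<1$, let $C<0$ be a constant, let $\Omega\subseteq\mathbb{R}^2$ be open and simply connected with $x_0\in\Omega$, and let $S:\Omega\to\mathbb{R}^2$ be $C^1$. Assume $|Sx_0| < \dfrac{-C\sqrt{\kappa_1^2-1}}{\kappa_1(\kappa_1-\kappa_2)}$, and that $\mathrm{curl}\,S = 0$ and $S\times \nabla(|S|^2) = 0$ on a neighborhood of $x_0$. Then for every $\delta_0$ with $0<\delta_0<\dfrac{1}{1-\kappa_1\kappa_2}\left(-C - \dfrac{\kappa_1(\kappa_1-\kappa_2)}{\sqrt{\kappa_1^2-1}}|Sx_0|\right)$, there exist an open neighborhood $U\subseteq\Omega$ of $x_0$ and a unique $C^2$ function $u:U\to\mathbb{R}$ satisfying on $U$ the system $\dfrac{(1-\kappa_1\kappa_2)u(x)+C}{(\kappa_1^2-\kappa_1\kappa_2)\sqrt{\kappa_1^2+(\kappa_1^2-1)|\nabla u(x)|^2}+\kappa_1^2(1-\kappa_1\kappa_2)}\,\nabla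 u(x) = \dfrac{Sx}{\kappa_1^2-1}$, together with $u(x_0)=\delta_0$ and $0<u(x)<\dfrac{-C}{1-\kappa_1\kappa_2}$ for all $x\in U$. -/
noncomputable section

/-- Euclidean inner product in `ℝ³`. -/
def dot3 (x y : Fin 3 → ℝ) : ℝ := x 0 * y 0 + x 1 * y 1 + x 2 * y 2

/-- Euclidean norm in `ℝ³`. -/
def norm3 (x : Fin 3 → ℝ) : ℝ := Real.sqrt (dot3 x x)

/-- Euclidean inner product in `ℝ²`. -/
def dot2 (x y : Fin 2 → ℝ) : ℝ := x 0 * y 0 + x 1 * y 1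

/-- Euclidean norm in `ℝ²`. -/
def norm2 (x : Fin 2 → ℝ) : ℝ := Real.sqrt (dot2 x x)

/-- The embedding `x = (x₁,x₂) ↦ (x₁,x₂,0)` of the source plane into `ℝ³`. -/
def lift2 (x : Fin 2 → ℝ) : Fin 3 → ℝ := ![x 0, x 1, 0]

/-- Cross product in `ℝ³`. -/
def cross3 (x y : Fin 3 → ℝ) : Fin 3 → ℝ :=
  ![x 1 * y 2 - x 2 * y 1, x 2 * y 0 - x 0 * y 2, x 0 * y 1 - x 1 * y 0]

/-- Partial derivative `∂f/∂xᵢ` of a scalar function on `ℝ²`. -/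
def pd (i : Fin 2) (f : (Fin 2 → ℝ) → ℝ) (x : Fin 2 → ℝ) : ℝ :=
  fderiv ℝ f x (Pi.single i 1)

/-- Gradient of a scalar function on `ℝ²`. -/
def grad2 (f : (Fin 2 → ℝ) → ℝ) (x : Fin 2 → ℝ) : Fin 2 → ℝ :=
  ![pd 0 f x, pd 1 f x]

/-- Two-dimensional curl of a plane field: `curl V = ∂V₂/∂x₁ - ∂V₁/∂x₂`. -/
def curl2 (V : (Fin 2 → ℝ) → (Fin 2 → ℝ)) (x : Fin 2 → ℝ) : ℝ :=
  pd 0 (fun y => V y 1) x - pd 1 (fun y => V y 0) x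

/-- Two-dimensional cross product `a × b = a₁b₂ - a₂b₁`. -/
def cross2v (a b : Fin 2 → ℝ) : ℝ := a 0 * b 1 - a 1 * b 0

end

/-- A function `u` solves the imaging system (6.1) on `U` with value `δ0` at `x0` and the
natural bounds `0 < u < -C/(1-κ₁κ₂)`. -/
def IsLensSolution (κ1 κ2 C : ℝ) (S : (Fin 2 → ℝ) → (Fin 2 → ℝ))
    (U : Set (Fin 2 → ℝ)) (x0 : Fin 2 → ℝ) (δ0 : ℝ) (u : (Fin 2 → ℝ) → ℝ) : Prop :=
  ContDiffOn ℝ 2 u U ∧ u x0 = δ0 ∧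
    (∀ x ∈ U,
      (((1 - κ1 * κ2) * u x + C) /
          ((κ1 ^ 2 - κ1 * κ2) * Real.sqrt (κ1 ^ 2 + (κ1 ^ 2 - 1) * norm2 (grad2 u x) ^ 2)
            + κ1 ^ 2 * (1 - κ1 * κ2))) • grad2 u x = (κ1 ^ 2 - 1)⁻¹ • S x) ∧
    ∀ x ∈ U, 0 < u x ∧ u x < -C / (1 - κ1 * κ2)

/-!
Write `z = (1 - κ₁κ₂) u + C` and `σ = |Sx|²`. The imaging equation forces `∇u` to be a negative
multiple of `Sx`, and squaring turns it into a quadratic equation for the factor. As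
`K = κ₁⁴ (1 - κ₂²) > 0`, this quadratic has a positive root exactly when its leading coefficient is
positive, and then only one. Hence the system is equivalent to `du = φ(x, u) ω`, where
`ω = ⟨S, ·⟩` and `φ` is an explicit smooth function of `u` and `σ`.

The hypotheses `curl S = 0` and `S × ∇|S|² = 0` say that `ω` is closed and `dₓφ ∧ ω = 0`. If
`dv = c ω`, then `φ(x, v) ω` is therefore closed, and the Poincaré lemma provides a primitive, which
again has differential parallel to `ω`. Starting from a constant, these Picard iterates converge to
a solution. Uniqueness is that of ordinary differential equations along rays, combined with
connectedness.
-/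

open Filter Metric Set
open scoped NNReal Topology

section PfaffSystem

variable {E F : Type*} [NormedAddCommGroup E] [NormedSpace ℝ E]
  [NormedAddCommGroup F] [NormedSpace ℝ F]

/-- The function `u` solves the Pfaff system `du = G(x, u)` at every point of `s`. -/
def IsPfaffSolutionOn (G : E × F → E →L[ℝ] F) (u : E → F) (s : Set E) : Prop :=
  ∀ x ∈ s, HasFDerivAt u (G (x, u x)) x

theorem lipschitzOnWith_slice_apply {G : E × F → E →L[ℝ] F} {t : Set (E × F)} {K : ℝ≥0}
    (hG : LipschitzOnWith K G t) (x h : E) :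
    LipschitzOnWith (K * ‖h‖₊) (fun y ↦ G (x, y) h) {y | (x, y) ∈ t} :=
  LipschitzOnWith.of_dist_le_mul fun y hy z hz ↦
    calc dist (G (x, y) h) (G (x, z) h)
      _ ≤ dist (G (x, y)) (G (x, z)) * ‖h‖ := by
          rw [dist_eq_norm, dist_eq_norm, ← sub_apply]
          exact ContinuousLinearMap.le_opNorm _ _
      _ ≤ K * dist (x, y) (x, z) * ‖h‖ :=
          mul_le_mul_of_nonneg_right (hG.dist_le_mul _ hy _ hz) (norm_nonneg _)
      _ = ↑(K * ‖h‖₊) * dist y z := by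
          rw [dist_prod_same_left, NNReal.coe_mul, coe_nnnorm, mul_right_comm]

namespace IsPfaffSolutionOn

variable {G : E × F → E →L[ℝ] F} {u v : E → F} {s : Set E} {x₀ : E}

theorem contDiffOn_succ (hu : IsPfaffSolutionOn G u s) (hs : IsOpen s) (n : ℕ)
    (hG : ∀ x ∈ s, ContDiffAt ℝ n G (x, u x)) : ContDiffOn ℝ (n + 1) u s := by
  have contDiffOn_of_comp {m : ℕ} (hm : m ≤ n) (hum : ContDiffOn ℝ m u s) :
      ContDiffOn ℝ (m + 1) u s := by
    refine (contDiffOn_succ_iff_fderiv_of_isOpen hs).2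
      ⟨fun x hx ↦ (hu x hx).differentiableAt.differentiableWithinAt, by simp, ?_⟩
    refine ContDiffOn.congr (fun x hx ↦ ?_) fun x hx ↦ (hu x hx).fderiv
    have hGm : ContDiffAt ℝ m G (x, u x) := (hG x hx).of_le (mod_cast hm)
    exact hGm.comp_contDiffWithinAt x (contDiffWithinAt_id.prodMk (hum x hx))
  induction n with
  | zero =>
    exact contDiffOn_of_comp le_rfl <| contDiffOn_zero.2 fun x hx ↦
      (hu x hx).continuousAt.continuousWithinAt
  | succ n ih =>
    refine contDiffOn_of_comp le_rfl ?_
    exact_mod_cast ih (fun x hx ↦ (hG x hx).of_le (mod_cast n.le_succ))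
      fun hm ↦ contDiffOn_of_comp (hm.trans n.le_succ)

/-- Along a ray from the centre the system is an ordinary differential equation. -/
theorem eqOn_of_starConvex (hu : IsPfaffSolutionOn G u s) (hv : IsPfaffSolutionOn G v s)
    (hs : StarConvex ℝ x₀ s) {t : Set (E × F)} {K : ℝ≥0} (hG : LipschitzOnWith K G t)
    (hut : ∀ x ∈ s, (x, u x) ∈ t) (hvt : ∀ x ∈ s, (x, v x) ∈ t) (huv : u x₀ = v x₀) :
    EqOn u v s := by
  intro x hx
  let γ : ℝ → E := fun τ ↦ x₀ + τ • (x - x₀)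
  have hγs : ∀ τ ∈ Icc (0 : ℝ) 1, γ τ ∈ s := fun τ hτ ↦ hs.add_smul_sub_mem hx hτ.1 hτ.2
  have hγ : ∀ τ, HasDerivAt γ (x - x₀) τ := fun τ ↦ by
    simpa only [one_smul, id_eq] using! ((hasDerivAt_id τ).smul_const (x - x₀)).const_add x₀
  have hray {w : E → F} (hw : IsPfaffSolutionOn G w s) {τ : ℝ} (hτ : τ ∈ Icc (0 : ℝ) 1) :
      HasDerivAt (w ∘ γ) (G (γ τ, w (γ τ)) (x - x₀)) τ :=
    (hw _ (hγs τ hτ)).comp_hasDerivAt τ (hγ τ)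
  have hEq : EqOn (u ∘ γ) (v ∘ γ) (Icc 0 1) :=
    ODE_solution_unique_of_mem_Icc_right (fun τ _ ↦ lipschitzOnWith_slice_apply hG (γ τ) (x - x₀))
      (fun τ hτ ↦ (hray hu hτ).continuousAt.continuousWithinAt)
      (fun τ hτ ↦ (hray hu (Ico_subset_Icc_self hτ)).hasDerivWithinAt)
      (fun τ hτ ↦ hut _ (hγs τ (Ico_subset_Icc_self hτ)))
      (fun τ hτ ↦ (hray hv hτ).continuousAt.continuousWithinAt)
      (fun τ hτ ↦ (hray hv (Ico_subset_Icc_self hτ)).hasDerivWithinAt)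
      (fun τ hτ ↦ hvt _ (hγs τ (Ico_subset_Icc_self hτ)))
      (by simpa [γ] using huv)
  simpa [γ] using hEq (right_mem_Icc.2 zero_le_one)

theorem eventuallyEq (hu : IsPfaffSolutionOn G u s) (hv : IsPfaffSolutionOn G v s)
    (hs : s ∈ 𝓝 x₀) (hG : ContDiffAt ℝ 1 G (x₀, u x₀)) (huv : u x₀ = v x₀) : u =ᶠ[𝓝 x₀] v := by
  obtain ⟨K, t, ht, hK⟩ := hG.exists_lipschitzOnWith
  have graph_mem {w : E → F} (hw : IsPfaffSolutionOn G w s) (hw₀ : w x₀ = u x₀) :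
      ∀ᶠ x in 𝓝 x₀, (x, w x) ∈ t := by
    have hcont := (hw x₀ (mem_of_mem_nhds hs)).continuousAt
    exact (continuousAt_id.prodMk hcont).eventually (show t ∈ 𝓝 (x₀, w x₀) from hw₀ ▸ ht)
  obtain ⟨r, hr, hball⟩ := eventually_nhds_iff_ball.1
    ((eventually_mem_set.2 hs).and ((graph_mem hu rfl).and (graph_mem hv huv.symm)))
  exact mem_of_superset (ball_mem_nhds x₀ hr) <|
    eqOn_of_starConvex (fun x hx ↦ hu x (hball x hx).1) (fun x hx ↦ hv x (hball x hx).1)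
      ((convex_ball x₀ r).starConvex (mem_ball_self hr)) hK
      (fun x hx ↦ (hball x hx).2.1) (fun x hx ↦ (hball x hx).2.2) huv

theorem eqOn_of_isPreconnected (hu : IsPfaffSolutionOn G u s) (hv : IsPfaffSolutionOn G v s)
    (hs : IsOpen s) (hs' : IsPreconnected s) (hG : ∀ x ∈ s, ContDiffAt ℝ 1 G (x, u x))
    (hx₀ : x₀ ∈ s) (huv : u x₀ = v x₀) : EqOn u v s := by
  have heq {x : E} (hx : x ∈ s) (h : u x = v x) : u =ᶠ[𝓝 x] v :=
    hu.eventuallyEq hv (hs.mem_nhds hx) (hG x hx) h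
  suffices hsub : s ⊆ {x | u =ᶠ[𝓝 x] v} from fun x hx ↦ (hsub hx).self_of_nhds
  refine hs'.subset_of_closure_inter_subset isOpen_setOfPred_eventually_nhds
    ⟨x₀, hx₀, heq hx₀ huv⟩ fun x ⟨hxcl, hx⟩ ↦ heq hx ?_
  by_contra hne
  have hev := ((hu x hx).continuousAt.ne_iff_eventually_ne (hv x hx).continuousAt).1 hne
  obtain ⟨y, hyne, hyeq⟩ := mem_closure_iff_frequently.1 hxcl |>.and_eventually hev |>.exists
  exact hyeq hyne.self_of_nhds

end IsPfaffSolutionOn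

theorem norm_sub_center_le_of_norm_hasFDerivAt_le {f : E → F} {f' : E → E →L[ℝ] F} {x₀ : E}
    {r M : ℝ} (hf : ∀ x ∈ ball x₀ r, HasFDerivAt f (f' x) x) (hM : ∀ x ∈ ball x₀ r, ‖f' x‖ ≤ M)
    {x : E} (hx : x ∈ ball x₀ r) : ‖f x - f x₀‖ ≤ M * r :=
  ((convex_ball x₀ r).norm_image_sub_le_of_norm_hasFDerivWithin_le
    (fun y hy ↦ (hf y hy).hasFDerivWithinAt) hM
    (mem_ball_self (pos_of_mem_ball hx)) hx).trans <|
    mul_le_mul_of_nonneg_left (mem_ball_iff_norm.1 hx).le ((norm_nonneg _).trans (hM x hx))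

/-- The functions `v n` are Picard iterates of the Pfaff system `du = G(x, u)`, `u x₀ = δ`, on the
ball of radius `r`, and their values stay within `ε` of `δ`. -/
structure IsPicardSeqOn (G : E × F → E →L[ℝ] F) (x₀ : E) (δ : F) (r ε : ℝ) (v : ℕ → E → F) :
    Prop where
  apply_center : ∀ n, v n x₀ = δ
  mapsTo : ∀ n, MapsTo (v n) (ball x₀ r) (closedBall δ ε)
  hasFDerivAt_succ : ∀ n, ∀ x ∈ ball x₀ r, HasFDerivAt (v (n + 1)) (G (x, v n x)) x

namespace IsPicardSeqOn

variable {G : E × F → E →L[ℝ] F} {x₀ : E} {δ : F} {r ε : ℝ} {v : ℕ → E → F} {K : ℝ≥0}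

theorem mem_cylinder (hv : IsPicardSeqOn G x₀ δ r ε v) (n : ℕ) {x : E} (hx : x ∈ ball x₀ r) :
    (x, v n x) ∈ ball x₀ r ×ˢ closedBall δ ε :=
  ⟨hx, hv.mapsTo n hx⟩

theorem dist_succ_le (hv : IsPicardSeqOn G x₀ δ r ε v)
    (hG : LipschitzOnWith K G (ball x₀ r ×ˢ closedBall δ ε)) (n : ℕ) {x : E}
    (hx : x ∈ ball x₀ r) : dist (v n x) (v (n + 1) x) ≤ 2 * ε * (K * r) ^ n := by
  induction n generalizing x with
  | zero =>
    calc dist (v 0 x) (v 1 x) ≤ dist (v 0 x) δ + dist (v 1 x) δ := dist_triangle_right _ _ _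
      _ ≤ ε + ε := add_le_add (hv.mapsTo 0 hx) (hv.mapsTo 1 hx)
      _ = 2 * ε * (K * r) ^ 0 := by ring
  | succ n ih =>
    have hderiv : ∀ y ∈ ball x₀ r,
        ‖G (y, v n y) - G (y, v (n + 1) y)‖ ≤ K * (2 * ε * (K * r) ^ n) := fun y hy ↦ by
      calc ‖G (y, v n y) - G (y, v (n + 1) y)‖
        _ ≤ K * dist (y, v n y) (y, v (n + 1) y) := by
            rw [← dist_eq_norm]
            exact hG.dist_le_mul _ (hv.mem_cylinder n hy) _ (hv.mem_cylinder (n + 1) hy)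
        _ ≤ K * (2 * ε * (K * r) ^ n) := by
            rw [dist_prod_same_left]
            exact mul_le_mul_of_nonneg_left (ih hy) K.coe_nonneg
    have hbound := norm_sub_center_le_of_norm_hasFDerivAt_le
      (fun y hy ↦ (hv.hasFDerivAt_succ n y hy).sub (hv.hasFDerivAt_succ (n + 1) y hy)) hderiv hx
    simp only [Pi.sub_apply, hv.apply_center, sub_self, sub_zero] at hbound
    calc dist (v (n + 1) x) (v (n + 2) x) ≤ K * (2 * ε * (K * r) ^ n) * r := by
          rwa [dist_eq_norm]
      _ = 2 * ε * (K * r) ^ (n + 1) := by ring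

theorem exists_tendstoUniformlyOn [CompleteSpace F] (hv : IsPicardSeqOn G x₀ δ r ε v)
    (hG : LipschitzOnWith K G (ball x₀ r ×ˢ closedBall δ ε)) (hr : 0 < r) (hKr : K * r < 1) :
    ∃ u, TendstoUniformlyOn v u atTop (ball x₀ r) := by
  have hgeom {x : E} (hx : x ∈ ball x₀ r) (n : ℕ) := hv.dist_succ_le hG n hx
  have hlim : ∀ x, ∃ y, x ∈ ball x₀ r → Tendsto (v · x) atTop (𝓝 y) := fun x ↦ by
    by_cases hx : x ∈ ball x₀ r
    · obtain ⟨y, hy⟩ := cauchySeq_tendsto_of_complete (cauchySeq_of_le_geometric _ _ hKr (hgeom hx))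
      exact ⟨y, fun _ ↦ hy⟩
    · exact ⟨δ, fun h ↦ absurd h hx⟩
  choose u hu using hlim
  have hrate : Tendsto (fun n ↦ 2 * ε * (K * r) ^ n / (1 - K * r)) atTop (𝓝 0) := by
    simpa using ((tendsto_pow_atTop_nhds_zero_of_lt_one (by positivity) hKr).const_mul
      (2 * ε)).div_const (1 - K * r)
  refine ⟨u, tendstoUniformlyOn_iff.2 fun η hη ↦ ?_⟩
  filter_upwards [hrate.eventually_lt_const hη] with n hn x hx
  rw [dist_comm]
  exact (dist_le_of_le_geometric_of_tendsto _ _ hKr (hgeom hx) (hu x hx) n).trans_lt hn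

theorem exists_isPfaffSolutionOn [CompleteSpace F] (hv : IsPicardSeqOn G x₀ δ r ε v)
    (hG : LipschitzOnWith K G (ball x₀ r ×ˢ closedBall δ ε)) (hr : 0 < r) (hKr : K * r < 1) :
    ∃ u, u x₀ = δ ∧ IsPfaffSolutionOn G u (ball x₀ r) := by
  obtain ⟨u, hu⟩ := hv.exists_tendstoUniformlyOn hG hr hKr
  have humem : ∀ x ∈ ball x₀ r, (x, u x) ∈ ball x₀ r ×ˢ closedBall δ ε := fun x hx ↦
    ⟨hx, isClosed_closedBall.mem_of_tendsto (hu.tendsto_at hx)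
      (Eventually.of_forall fun n ↦ hv.mapsTo n hx)⟩
  have hgraph : TendstoUniformlyOn (fun n x ↦ (x, v n x)) (fun x ↦ (x, u x)) atTop (ball x₀ r) := by
    simpa only [tendstoUniformlyOn_iff, dist_prod_same_left] using hu
  have hderiv : TendstoUniformlyOn (fun n x ↦ G (x, v n x)) (fun x ↦ G (x, u x)) atTop
      (ball x₀ r) :=
    hG.uniformContinuousOn.comp_tendstoUniformlyOn_eventually
      (Eventually.of_forall fun n x hx ↦ hv.mem_cylinder n hx) humem hgraph
  refine ⟨u, ?_, fun x hx ↦ hasFDerivAt_of_tendstoUniformlyOn isOpen_ball hderiv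
    hv.hasFDerivAt_succ (fun y hy ↦ (tendsto_add_atTop_iff_nat 1).2 (hu.tendsto_at hy)) hx⟩
  have hcenter := hu.tendsto_at (mem_ball_self hr)
  simp only [hv.apply_center] at hcenter
  exact tendsto_nhds_unique hcenter tendsto_const_nhds

end IsPicardSeqOn

end PfaffSystem

section ClosedForm

variable {E F : Type*} [NormedAddCommGroup E] [NormedSpace ℝ E]
  [NormedAddCommGroup F] [NormedSpace ℝ F]

/-- The differential `1`-form `ω` is closed at `x`: it is differentiable there and its derivative,
a bilinear form, is symmetric. -/
def IsClosedFormAt (ω : E → E →L[ℝ] F) (x : E) : Prop :=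
  DifferentiableAt ℝ ω x ∧ ∀ h k, fderiv ℝ ω x h k = fderiv ℝ ω x k h

theorem exists_primitive_apply_eq [CompleteSpace F] {ω : E → E →L[ℝ] F} {s : Set E}
    (hs : Convex ℝ s) (hso : IsOpen s) (hω : ∀ x ∈ s, IsClosedFormAt ω x) (x₀ : E) (δ : F) :
    ∃ f : E → F, f x₀ = δ ∧ ∀ x ∈ s, HasFDerivAt f (ω x) x := by
  obtain ⟨f, hf⟩ := hs.exists_forall_hasFDerivAt_of_fderiv_symmetric hso
    (fun x hx ↦ (hω x hx).1.differentiableWithinAt) fun x hx ↦ (hω x hx).2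
  exact ⟨fun x ↦ f x - f x₀ + δ, by simp, fun x hx ↦ ((hf x hx).sub_const _).add_const _⟩

/-- The Pfaff system `du = φ(x, u) ω(x)` satisfies at `p` the Frobenius integrability condition
`dω = 0` and `dₓφ ∧ ω = 0`, where `dₓ` is the differential in the first variable. -/
structure IsFrobeniusIntegrableAt (φ : E × ℝ → ℝ) (ω : E → E →L[ℝ] ℝ) (p : E × ℝ) : Prop where
  isClosedFormAt : IsClosedFormAt ω p.1
  differentiableAt : DifferentiableAt ℝ φ p
  wedge_eq_zero : ∀ h k, fderiv ℝ φ p (h, 0) * ω p.1 k = fderiv ℝ φ p (k, 0) * ω p.1 h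

variable {φ : E × ℝ → ℝ} {ω : E → E →L[ℝ] ℝ} {x₀ : E} {δ : ℝ}

/-- The `u`-derivative of `φ` drops out because `dv ∧ ω = 0`. -/
theorem IsFrobeniusIntegrableAt.isClosedFormAt_graph {v : E → ℝ} {x : E} {c : ℝ}
    (h : IsFrobeniusIntegrableAt φ ω (x, v x)) (hv : HasFDerivAt v (c • ω x) x) :
    IsClosedFormAt (fun y ↦ φ (y, v y) • ω y) x := by
  have hφ : HasFDerivAt (fun y ↦ φ (y, v y))
      ((fderiv ℝ φ (x, v x)).comp ((ContinuousLinearMap.id ℝ E).prod (c • ω x))) x :=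
    h.differentiableAt.hasFDerivAt.comp x ((hasFDerivAt_id x).prodMk hv)
  have hω : IsClosedFormAt ω x := h.isClosedFormAt
  have hφω : HasFDerivAt (fun y ↦ φ (y, v y) • ω y) _ x := hφ.smul hω.1.hasFDerivAt
  refine ⟨hφω.differentiableAt, fun a b ↦ ?_⟩
  have split (e : E) : fderiv ℝ φ (x, v x) (e, c * ω x e) =
      fderiv ℝ φ (x, v x) (e, 0) + c * ω x e * fderiv ℝ φ (x, v x) (0, 1) := by
    rw [← smul_eq_mul (c * ω x e), ← map_smul, ← map_add]
    simp
  have hwedge : fderiv ℝ φ (x, v x) (a, 0) * ω x b = fderiv ℝ φ (x, v x) (b, 0) * ω x a :=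
    h.wedge_eq_zero a b
  rw [hφω.fderiv]
  simp only [add_apply, smul_apply, ContinuousLinearMap.smulRight_apply,
    ContinuousLinearMap.comp_apply, ContinuousLinearMap.prod_apply, ContinuousLinearMap.id_apply,
    smul_eq_mul, split]
  linear_combination hwedge + φ (x, v x) * hω.2 a b

theorem isFrobeniusIntegrableAt_comp {Q : ℝ × ℝ → ℝ} {σ : E → ℝ} {p : E × ℝ}
    (hω : IsClosedFormAt ω p.1) (hσ : DifferentiableAt ℝ σ p.1)
    (hQ : DifferentiableAt ℝ Q (p.2, σ p.1))
    (hwedge : ∀ h k, fderiv ℝ σ p.1 h * ω p.1 k = fderiv ℝ σ p.1 k * ω p.1 h) :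
    IsFrobeniusIntegrableAt (fun q ↦ Q (q.2, σ q.1)) ω p := by
  have hφ : HasFDerivAt (fun q : E × ℝ ↦ Q (q.2, σ q.1)) _ p :=
    hQ.hasFDerivAt.comp p (hasFDerivAt_snd.prodMk (hσ.hasFDerivAt.comp p hasFDerivAt_fst))
  have hφ_fst (h : E) : fderiv ℝ (fun q : E × ℝ ↦ Q (q.2, σ q.1)) p (h, 0) =
      fderiv ℝ σ p.1 h * fderiv ℝ Q (p.2, σ p.1) (0, 1) := by
    rw [hφ.fderiv, ← smul_eq_mul, ← map_smul]
    simp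
  refine ⟨hω, hφ.differentiableAt, fun h k ↦ ?_⟩
  rw [hφ_fst, hφ_fst]
  linear_combination fderiv ℝ Q (p.2, σ p.1) (0, 1) * hwedge h k

theorem exists_isPicardSeqOn {r ε M : ℝ} (hε : 0 ≤ ε)
    (hint : ∀ p ∈ ball x₀ r ×ˢ closedBall δ ε, IsFrobeniusIntegrableAt φ ω p)
    (hM : ∀ p ∈ ball x₀ r ×ˢ closedBall δ ε, ‖φ p • ω p.1‖ ≤ M) (hMr : M * r ≤ ε) :
    ∃ v, IsPicardSeqOn (fun p ↦ φ p • ω p.1) x₀ δ r ε v := by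
  let T := {v : E → ℝ // v x₀ = δ ∧ MapsTo v (ball x₀ r) (closedBall δ ε) ∧
    ∀ x ∈ ball x₀ r, ∃ c : ℝ, HasFDerivAt v (c • ω x) x}
  have picard_step (v : T) : ∃ f : T, ∀ x ∈ ball x₀ r,
      HasFDerivAt f.1 (φ (x, v.1 x) • ω x) x := by
    obtain ⟨v, -, hvmem, hv⟩ := v
    have hclosed : ∀ x ∈ ball x₀ r, IsClosedFormAt (fun y ↦ φ (y, v y) • ω y) x := fun x hx ↦ by
      obtain ⟨c, hc⟩ := hv x hx
      exact (hint (x, v x) ⟨hx, hvmem hx⟩).isClosedFormAt_graph hc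
    obtain ⟨f, hfδ, hf⟩ :=
      exists_primitive_apply_eq (convex_ball x₀ r) isOpen_ball hclosed x₀ δ
    refine ⟨⟨f, hfδ, fun x hx ↦ ?_, fun x hx ↦ ⟨_, hf x hx⟩⟩, hf⟩
    rw [mem_closedBall_iff_norm, ← hfδ]
    exact (norm_sub_center_le_of_norm_hasFDerivAt_le hf
      (fun y hy ↦ hM (y, v y) ⟨hy, hvmem hy⟩) hx).trans hMr
  choose Φ hΦ using picard_step
  let v₀ : T := ⟨fun _ ↦ δ, rfl, fun _ _ ↦ mem_closedBall_self hε,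
    fun x _ ↦ ⟨0, by simpa using hasFDerivAt_const δ x⟩⟩
  refine ⟨fun n ↦ (Φ^[n] v₀).1, fun n ↦ (Φ^[n] v₀).2.1, fun n ↦ (Φ^[n] v₀).2.2.1, fun n ↦ ?_⟩
  rw [Function.iterate_succ_apply']
  exact hΦ _

theorem exists_hasFDerivAt_of_isFrobeniusIntegrableAt (hφ : ContDiffAt ℝ 1 φ (x₀, δ))
    (hω : ContDiffAt ℝ 1 ω x₀) (hint : ∀ᶠ p in 𝓝 (x₀, δ), IsFrobeniusIntegrableAt φ ω p) :
    ∃ u : E → ℝ, u x₀ = δ ∧ ∀ᶠ x in 𝓝 x₀, HasFDerivAt u (φ (x, u x) • ω x) x := by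
  have hG : ContDiffAt ℝ 1 (fun p : E × ℝ ↦ φ p • ω p.1) (x₀, δ) :=
    hφ.smul (hω.comp (x₀, δ) contDiffAt_fst)
  obtain ⟨K, t, ht, hLip⟩ := hG.exists_lipschitzOnWith
  obtain ⟨M, hM⟩ := exists_gt ‖φ (x₀, δ) • ω x₀‖
  obtain ⟨ρ, hρ, hball⟩ := eventually_nhds_iff_ball.1 <|
    hint.and ((hG.continuousAt.norm.eventually_lt_const hM).and ht)
  obtain ⟨r, ⟨hrρ, hMr, hKr⟩, hr : 0 < r⟩ :
      ∃ r : ℝ, (r < ρ ∧ M * r < ρ / 2 ∧ K * r < 1) ∧ 0 < r := by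
    have hlim (c : ℝ) : Tendsto (c * ·) (𝓝[>] 0) (𝓝 0) :=
      tendsto_nhdsWithin_of_tendsto_nhds (by simpa using (continuous_const_mul c).tendsto 0)
    refine Eventually.exists (f := 𝓝[>] 0) (.and (.and ?_ (.and ?_ ?_)) self_mem_nhdsWithin)
    · simpa using (hlim 1).eventually_lt_const hρ
    · exact (hlim M).eventually_lt_const (half_pos hρ)
    · exact (hlim K).eventually_lt_const one_pos
  have hcyl : ball x₀ r ×ˢ closedBall δ (ρ / 2) ⊆ ball (x₀, δ) ρ := by
    rw [← ball_prod_same]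
    exact prod_mono (ball_subset_ball hrρ.le) (closedBall_subset_ball (half_lt_self hρ))
  obtain ⟨v, hv⟩ := exists_isPicardSeqOn (half_pos hρ).le
    (fun p hp ↦ (hball p (hcyl hp)).1) (fun p hp ↦ (hball p (hcyl hp)).2.1.le) hMr.le
  obtain ⟨u, hu₀, hu⟩ := hv.exists_isPfaffSolutionOn
    (hLip.mono fun p hp ↦ (hball p (hcyl hp)).2.2) hr hKr
  exact ⟨u, hu₀, eventually_of_mem (ball_mem_nhds x₀ hr) hu⟩

end ClosedForm

section PositiveRoot

/-- The larger root of the quadratic polynomial `A q² - 2 c q - K`, for `A > 0`. -/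
noncomputable def largerRoot (A c K : ℝ) : ℝ := (c + √(c ^ 2 + A * K)) / A

theorem pos_and_quadratic_eq_zero_iff {A c K q : ℝ} (hc : 0 ≤ c) (hK : 0 < K) :
    0 < q ∧ A * q ^ 2 - 2 * c * q - K = 0 ↔ 0 < A ∧ q = largerRoot A c K := by
  constructor
  · rintro ⟨hq, hquad⟩
    have hA : 0 < A := pos_of_mul_pos_left (b := q ^ 2) (by nlinarith) (sq_nonneg q)
    have hAq : 0 ≤ A * q - c := nonneg_of_mul_nonneg_left (b := q) (by nlinarith) hq
    have hdisc : c ^ 2 + A * K = (A * q - c) ^ 2 := by linear_combination -A * hquad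
    refine ⟨hA, ?_⟩
    rw [largerRoot, hdisc, Real.sqrt_sq hAq, eq_div_iff hA.ne']
    ring
  · rintro ⟨hA, rfl⟩
    have hdisc_pos : 0 < c ^ 2 + A * K := by positivity
    have hdisc : √(c ^ 2 + A * K) ^ 2 = c ^ 2 + A * K := Real.sq_sqrt hdisc_pos.le
    refine ⟨div_pos (add_pos_of_nonneg_of_pos hc (Real.sqrt_pos.2 hdisc_pos)) hA, ?_⟩
    rw [largerRoot]
    field_simp
    linear_combination hdisc

theorem contDiffAt_largerRoot {E : Type*} [NormedAddCommGroup E] [NormedSpace ℝ E]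
    {A c : E → ℝ} {K : ℝ} {x : E} {n : WithTop ℕ∞} (hA : ContDiffAt ℝ n A x)
    (hc : ContDiffAt ℝ n c x) (hApos : 0 < A x) (hK : 0 < K) :
    ContDiffAt ℝ n (fun y ↦ largerRoot (A y) (c y) K) x := by
  have hdisc : c x ^ 2 + A x * K ≠ 0 := by positivity
  exact (hc.add (((hc.pow 2).add (hA.mul contDiffAt_const)).sqrt hdisc)).div hA hApos.ne'

end PositiveRoot

section LensEquation

/-- The leading coefficient of the quadratic equation satisfied by `|∇u| / |Sx|`, where
`z = (1 - κ₁κ₂) u(x) + C` and `σ = |Sx|²`. For `z < 0` it is positive exactly when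
`κ₁(κ₁ - κ₂)|Sx| < -z √(κ₁² - 1)`, the bound imposed at `x₀`. -/
def lensLeadingCoeff (κ₁ κ₂ z σ : ℝ) : ℝ :=
  (κ₁ ^ 2 - 1) * z ^ 2 - (κ₁ * (κ₁ - κ₂)) ^ 2 * σ

/-- The factor `φ` for which the imaging system reads `∇u = φ Sx`, with `z` and `σ` as in
`lensLeadingCoeff`. -/
noncomputable def lensSlope (κ₁ κ₂ z σ : ℝ) : ℝ :=
  -largerRoot (lensLeadingCoeff κ₁ κ₂ z σ) (-(κ₁ ^ 2 * (1 - κ₁ * κ₂) * z)) (κ₁ ^ 4 * (1 - κ₂ ^ 2))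

variable {κ₁ κ₂ z σ : ℝ}

theorem one_sub_sq_pos (hκ₁ : 1 < κ₁) (hκ₂ : -1 < κ₂) (hκ : κ₁ * κ₂ < 1) : 0 < 1 - κ₂ ^ 2 := by
  have : κ₂ < 1 := by nlinarith
  nlinarith

theorem lens_scalar_equation_iff (hκ₁ : 1 < κ₁) (hκ₂ : -1 < κ₂) (hκ : κ₁ * κ₂ < 1) (hz : z < 0)
    (hσ : 0 ≤ σ) {p : ℝ} :
    (κ₁ ^ 2 - 1) * z * p = (κ₁ ^ 2 - κ₁ * κ₂) * √(κ₁ ^ 2 + (κ₁ ^ 2 - 1) * (p ^ 2 * σ))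
        + κ₁ ^ 2 * (1 - κ₁ * κ₂) ↔
      0 < lensLeadingCoeff κ₁ κ₂ z σ ∧ p = lensSlope κ₁ κ₂ z σ := by
  have hm : 0 < κ₁ ^ 2 - 1 := by nlinarith
  have hb : 0 < κ₁ ^ 2 - κ₁ * κ₂ := by linarith
  have hK : 0 < κ₁ ^ 4 * (1 - κ₂ ^ 2) := mul_pos (by positivity) (one_sub_sq_pos hκ₁ hκ₂ hκ)
  have hka : 0 < κ₁ ^ 2 * (1 - κ₁ * κ₂) := mul_pos (by positivity) (sub_pos.2 hκ)
  have hc : 0 ≤ -(κ₁ ^ 2 * (1 - κ₁ * κ₂) * z) :=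
    neg_nonneg.2 (mul_nonpos_of_nonneg_of_nonpos hka.le hz.le)
  obtain ⟨q, rfl⟩ : ∃ q, p = -q := ⟨-p, (neg_neg p).symm⟩
  rw [mul_neg, neg_sq, lensSlope, neg_inj, ← pos_and_quadratic_eq_zero_iff hc hK,
    ← sub_eq_iff_eq_add]
  set X := -((κ₁ ^ 2 - 1) * z * q) - κ₁ ^ 2 * (1 - κ₁ * κ₂) with hX
  set y := κ₁ ^ 2 + (κ₁ ^ 2 - 1) * (q ^ 2 * σ) with hy
  have hy₀ : 0 ≤ y := by positivity
  have hquad : X ^ 2 - (κ₁ ^ 2 - κ₁ * κ₂) ^ 2 * y = (κ₁ ^ 2 - 1) *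
      (lensLeadingCoeff κ₁ κ₂ z σ * q ^ 2 - 2 * -(κ₁ ^ 2 * (1 - κ₁ * κ₂) * z) * q
        - κ₁ ^ 4 * (1 - κ₂ ^ 2)) := by
    rw [hX, hy, lensLeadingCoeff]
    ring
  constructor
  · intro h
    have hXnonneg : 0 ≤ X := h ▸ by positivity
    have hq : 0 < q := pos_of_mul_pos_right (a := (κ₁ ^ 2 - 1) * -z) (by linarith)
      (mul_nonneg hm.le (neg_nonneg.2 hz.le))
    refine ⟨hq, (mul_eq_zero.1 (hquad.symm.trans ?_)).resolve_left hm.ne'⟩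
    rw [h, mul_pow, Real.sq_sqrt hy₀, sub_self]
  · rintro ⟨hq, hroot⟩
    have hXnonneg : 0 ≤ X := by
      have hlead : lensLeadingCoeff κ₁ κ₂ z σ ≤ (κ₁ ^ 2 - 1) * z ^ 2 :=
        sub_le_self _ (by positivity)
      have hleadq : 2 * -(κ₁ ^ 2 * (1 - κ₁ * κ₂) * z) < lensLeadingCoeff κ₁ κ₂ z σ * q := by
        nlinarith
      have hbound : -z * (2 * (κ₁ ^ 2 * (1 - κ₁ * κ₂))) < -z * (-((κ₁ ^ 2 - 1) * z * q)) := by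
        nlinarith
      linarith [lt_of_mul_lt_mul_left hbound (neg_nonneg.2 hz.le)]
    rw [hroot, mul_zero, sub_eq_zero] at hquad
    rw [← Real.sqrt_sq hXnonneg, hquad, Real.sqrt_mul (sq_nonneg _), Real.sqrt_sq hb.le]

theorem norm2_sq (g : Fin 2 → ℝ) : norm2 g ^ 2 = dot2 g g :=
  Real.sq_sqrt (add_nonneg (mul_self_nonneg _) (mul_self_nonneg _))

theorem norm2_smul_sq (c : ℝ) (g : Fin 2 → ℝ) : norm2 (c • g) ^ 2 = c ^ 2 * norm2 g ^ 2 := by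
  simp only [norm2_sq, dot2, Pi.smul_apply, smul_eq_mul]
  ring

theorem lens_equation_iff (hκ₁ : 1 < κ₁) (hκ₂ : -1 < κ₂) (hκ : κ₁ * κ₂ < 1) (hz : z < 0)
    {g s : Fin 2 → ℝ} :
    (z / ((κ₁ ^ 2 - κ₁ * κ₂) * √(κ₁ ^ 2 + (κ₁ ^ 2 - 1) * norm2 g ^ 2)
        + κ₁ ^ 2 * (1 - κ₁ * κ₂))) • g = (κ₁ ^ 2 - 1)⁻¹ • s ↔
      0 < lensLeadingCoeff κ₁ κ₂ z (norm2 s ^ 2) ∧ g = lensSlope κ₁ κ₂ z (norm2 s ^ 2) • s := by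
  have hm : 0 < κ₁ ^ 2 - 1 := by nlinarith
  have hb : 0 < κ₁ ^ 2 - κ₁ * κ₂ := by linarith
  set D := (κ₁ ^ 2 - κ₁ * κ₂) * √(κ₁ ^ 2 + (κ₁ ^ 2 - 1) * norm2 g ^ 2)
    + κ₁ ^ 2 * (1 - κ₁ * κ₂) with hD
  have hD₀ : 0 < D :=
    add_pos_of_nonneg_of_pos (by positivity) (mul_pos (by positivity) (sub_pos.2 hκ))
  have hscalar {p : ℝ} (hg : g = p • s) : (κ₁ ^ 2 - 1) * z * p = D ↔
      0 < lensLeadingCoeff κ₁ κ₂ z (norm2 s ^ 2) ∧ p = lensSlope κ₁ κ₂ z (norm2 s ^ 2) := by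
    rw [hD, hg, norm2_smul_sq]
    exact lens_scalar_equation_iff hκ₁ hκ₂ hκ hz (sq_nonneg _)
  constructor
  · intro h
    have hg : g = ((z / D)⁻¹ * (κ₁ ^ 2 - 1)⁻¹) • s := by
      rw [mul_smul, ← h, inv_smul_smul₀ (div_ne_zero hz.ne hD₀.ne')]
    obtain ⟨hlead, hslope⟩ := (hscalar hg).1 (by field_simp [hz.ne])
    exact ⟨hlead, hslope ▸ hg⟩
  · rintro ⟨hlead, hg⟩
    have hslope := (hscalar hg).2 ⟨hlead, rfl⟩
    rw [hg, smul_smul, div_mul_eq_mul_div, ← hslope, mul_assoc, div_mul_cancel_right₀]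
    exact mul_ne_zero hz.ne (right_ne_zero_of_mul (hslope ▸ hD₀.ne'))

theorem contDiffAt_lensSlope {E : Type*} [NormedAddCommGroup E] [NormedSpace ℝ E] {z σ : E → ℝ}
    {x : E} {n : WithTop ℕ∞} (hκ₁ : 1 < κ₁) (hκ₂ : -1 < κ₂) (hκ : κ₁ * κ₂ < 1)
    (hz : ContDiffAt ℝ n z x) (hσ : ContDiffAt ℝ n σ x)
    (hlead : 0 < lensLeadingCoeff κ₁ κ₂ (z x) (σ x)) :
    ContDiffAt ℝ n (fun y ↦ lensSlope κ₁ κ₂ (z y) (σ y)) x := by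
  have hK : 0 < κ₁ ^ 4 * (1 - κ₂ ^ 2) := mul_pos (by positivity) (one_sub_sq_pos hκ₁ hκ₂ hκ)
  have hA : ContDiffAt ℝ n (fun y ↦ lensLeadingCoeff κ₁ κ₂ (z y) (σ y)) x :=
    (contDiffAt_const.mul (hz.pow 2)).sub (contDiffAt_const.mul hσ)
  exact (contDiffAt_largerRoot hA (contDiffAt_const.mul hz).neg hlead hK).neg

end LensEquation

section PlaneField

/-- The inner product `dot2` as a continuous bilinear map; it turns a plane field `V` into the
differential form `V₁ dx₁ + V₂ dx₂`. -/
noncomputable def dot2CLM : (Fin 2 → ℝ) →L[ℝ] (Fin 2 → ℝ) →L[ℝ] ℝ :=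
  ∑ i, (ContinuousLinearMap.proj i).smulRight (ContinuousLinearMap.proj i : (Fin 2 → ℝ) →L[ℝ] ℝ)

theorem dot2CLM_apply (s h : Fin 2 → ℝ) : dot2CLM s h = dot2 s h := by
  simp [dot2CLM, dot2, Fin.sum_univ_two]

theorem fderiv_eq_dot2CLM_grad2 (f : (Fin 2 → ℝ) → ℝ) (x : Fin 2 → ℝ) :
    fderiv ℝ f x = dot2CLM (grad2 f x) := by
  ext h
  have hh : h = h 0 • Pi.single 0 1 + h 1 • Pi.single 1 1 := by
    ext i
    fin_cases i <;> simp
  rw [dot2CLM_apply]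
  conv_lhs => rw [hh, map_add, map_smul, map_smul]
  simp [dot2, grad2, pd, mul_comm]

theorem hasFDerivAt_dot2CLM_iff {f : (Fin 2 → ℝ) → ℝ} {x g : Fin 2 → ℝ} :
    HasFDerivAt f (dot2CLM g) x ↔ DifferentiableAt ℝ f x ∧ grad2 f x = g := by
  refine ⟨fun h ↦ ⟨h.differentiableAt, ?_⟩, fun ⟨h, hg⟩ ↦ ?_⟩
  · ext i
    fin_cases i <;> simp [grad2, pd, h.fderiv, dot2CLM_apply, dot2]
  · rw [← hg, ← fderiv_eq_dot2CLM_grad2]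
    exact h.hasFDerivAt

theorem isClosedFormAt_dot2CLM {V : (Fin 2 → ℝ) → Fin 2 → ℝ} {x : Fin 2 → ℝ}
    (hV : DifferentiableAt ℝ V x) (hcurl : curl2 V x = 0) :
    IsClosedFormAt (fun y ↦ dot2CLM (V y)) x := by
  have hω : HasFDerivAt (fun y ↦ dot2CLM (V y)) _ x := dot2CLM.hasFDerivAt.comp x hV.hasFDerivAt
  have hcoord (h : Fin 2 → ℝ) (i : Fin 2) :
      fderiv ℝ V x h i = dot2 (grad2 (fun y ↦ V y i) x) h := by
    rw [← dot2CLM_apply, ← fderiv_eq_dot2CLM_grad2, fderiv_apply hV]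
    rfl
  refine ⟨hω.differentiableAt, fun h k ↦ ?_⟩
  have hfderiv (a b : Fin 2 → ℝ) : fderiv ℝ (fun y ↦ dot2CLM (V y)) x a b =
      dot2 (fderiv ℝ V x a) b := by
    rw [hω.fderiv, ContinuousLinearMap.comp_apply, dot2CLM_apply]
  rw [hfderiv, hfderiv, dot2, dot2, hcoord, hcoord, hcoord, hcoord]
  simp only [curl2] at hcurl
  simp only [dot2, grad2, Matrix.cons_val_zero, Matrix.cons_val_one]
  linear_combination (h 0 * k 1 - h 1 * k 0) * hcurl

theorem fderiv_mul_dot2CLM_comm {f : (Fin 2 → ℝ) → ℝ} {x s : Fin 2 → ℝ}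
    (hcross : cross2v s (grad2 f x) = 0) (h k : Fin 2 → ℝ) :
    fderiv ℝ f x h * dot2CLM s k = fderiv ℝ f x k * dot2CLM s h := by
  rw [fderiv_eq_dot2CLM_grad2]
  simp only [cross2v] at hcross
  simp only [dot2CLM_apply, dot2]
  linear_combination (h 1 * k 0 - h 0 * k 1) * hcross

end PlaneField

section ImagingSystem

variable {κ₁ κ₂ C δ : ℝ} {S : (Fin 2 → ℝ) → Fin 2 → ℝ} {x₀ : Fin 2 → ℝ} {p : (Fin 2 → ℝ) × ℝ}

theorem contDiff_norm2_sq {n : WithTop ℕ∞} : ContDiff ℝ n fun g : Fin 2 → ℝ ↦ norm2 g ^ 2 := by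
  simp only [norm2_sq, dot2]
  fun_prop

/-- The set of pairs `(x, u)` at which the imaging system can be solved for `∇u`, with `u` within
the bounds imposed on the lens. -/
def imagingRegion (κ₁ κ₂ C : ℝ) (S : (Fin 2 → ℝ) → Fin 2 → ℝ) : Set ((Fin 2 → ℝ) × ℝ) :=
  {p | 0 < p.2 ∧ (1 - κ₁ * κ₂) * p.2 + C < 0 ∧
    0 < lensLeadingCoeff κ₁ κ₂ ((1 - κ₁ * κ₂) * p.2 + C) (norm2 (S p.1) ^ 2)}

/-- The factor `φ(x, u)` of the imaging system solved for the gradient, `∇u = φ(x, u) Sx`. -/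
noncomputable def imagingFactor (κ₁ κ₂ C : ℝ) (S : (Fin 2 → ℝ) → Fin 2 → ℝ)
    (p : (Fin 2 → ℝ) × ℝ) : ℝ :=
  lensSlope κ₁ κ₂ ((1 - κ₁ * κ₂) * p.2 + C) (norm2 (S p.1) ^ 2)

/-- The form `du` prescribed by the imaging system at `(x, u)`. -/
noncomputable def imagingForm (κ₁ κ₂ C : ℝ) (S : (Fin 2 → ℝ) → Fin 2 → ℝ)
    (p : (Fin 2 → ℝ) × ℝ) : (Fin 2 → ℝ) →L[ℝ] ℝ :=
  imagingFactor κ₁ κ₂ C S p • dot2CLM (S p.1)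

theorem mem_imagingRegion_of_lt (hκ₁ : 1 < κ₁) (hκ : κ₁ * κ₂ < 1) (hδ₀ : 0 < δ)
    (hδ : δ < (1 - κ₁ * κ₂)⁻¹ * (-C - κ₁ * (κ₁ - κ₂) / √(κ₁ ^ 2 - 1) * norm2 (S x₀))) :
    (x₀, δ) ∈ imagingRegion κ₁ κ₂ C S := by
  have hm : 0 < κ₁ ^ 2 - 1 := by nlinarith
  have hb : 0 < κ₁ * (κ₁ - κ₂) := by nlinarith
  have hnorm : 0 ≤ norm2 (S x₀) := Real.sqrt_nonneg _
  have hz : κ₁ * (κ₁ - κ₂) / √(κ₁ ^ 2 - 1) * norm2 (S x₀) < -((1 - κ₁ * κ₂) * δ + C) := by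
    rw [lt_inv_mul_iff₀ (sub_pos.2 hκ)] at hδ
    linarith
  have hz₀ : 0 < -((1 - κ₁ * κ₂) * δ + C) := hz.trans_le' (by positivity)
  refine ⟨hδ₀, neg_pos.1 hz₀, sub_pos.2 ?_⟩
  rw [div_mul_eq_mul_div, div_lt_iff₀ (Real.sqrt_pos.2 hm)] at hz
  calc (κ₁ * (κ₁ - κ₂)) ^ 2 * norm2 (S x₀) ^ 2 = (κ₁ * (κ₁ - κ₂) * norm2 (S x₀)) ^ 2 :=
        (mul_pow _ _ 2).symm
    _ < (-((1 - κ₁ * κ₂) * δ + C) * √(κ₁ ^ 2 - 1)) ^ 2 :=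
        pow_lt_pow_left₀ hz (by positivity) two_ne_zero
    _ = (κ₁ ^ 2 - 1) * ((1 - κ₁ * κ₂) * δ + C) ^ 2 := by
        rw [mul_pow, Real.sq_sqrt hm.le, neg_sq, mul_comm]

theorem imagingRegion_mem_nhds (hS : ContinuousAt S p.1) (hp : p ∈ imagingRegion κ₁ κ₂ C S) :
    imagingRegion κ₁ κ₂ C S ∈ 𝓝 p := by
  have hz : ContinuousAt (fun q : (Fin 2 → ℝ) × ℝ ↦ (1 - κ₁ * κ₂) * q.2 + C) p := by fun_prop
  have hσ : ContinuousAt (fun q : (Fin 2 → ℝ) × ℝ ↦ norm2 (S q.1) ^ 2) p :=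
    (contDiff_norm2_sq (n := 0)).continuous.continuousAt.comp (hS.comp continuousAt_fst)
  have hlead : ContinuousAt (fun q : (Fin 2 → ℝ) × ℝ ↦
      lensLeadingCoeff κ₁ κ₂ ((1 - κ₁ * κ₂) * q.2 + C) (norm2 (S q.1) ^ 2)) p :=
    ((hz.pow 2).const_mul _).sub (hσ.const_mul _)
  filter_upwards [continuousAt_snd.eventually_const_lt hp.1, hz.eventually_lt_const hp.2.1,
    hlead.eventually_const_lt hp.2.2] with q h₁ h₂ h₃ using ⟨h₁, h₂, h₃⟩

theorem contDiffAt_imagingFactor (hκ₁ : 1 < κ₁) (hκ₂ : -1 < κ₂) (hκ : κ₁ * κ₂ < 1)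
    {n : WithTop ℕ∞} (hS : ContDiffAt ℝ n S p.1) (hp : p ∈ imagingRegion κ₁ κ₂ C S) :
    ContDiffAt ℝ n (imagingFactor κ₁ κ₂ C S) p :=
  contDiffAt_lensSlope hκ₁ hκ₂ hκ (by fun_prop)
    (contDiff_norm2_sq.contDiffAt.comp p (hS.comp p contDiffAt_fst)) hp.2.2

theorem contDiffAt_imagingForm (hκ₁ : 1 < κ₁) (hκ₂ : -1 < κ₂) (hκ : κ₁ * κ₂ < 1)
    {n : WithTop ℕ∞} (hS : ContDiffAt ℝ n S p.1) (hp : p ∈ imagingRegion κ₁ κ₂ C S) :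
    ContDiffAt ℝ n (imagingForm κ₁ κ₂ C S) p :=
  (contDiffAt_imagingFactor hκ₁ hκ₂ hκ hS hp).smul
    (dot2CLM.contDiff.contDiffAt.comp p (hS.comp p contDiffAt_fst))

theorem isFrobeniusIntegrableAt_imagingFactor (hκ₁ : 1 < κ₁) (hκ₂ : -1 < κ₂) (hκ : κ₁ * κ₂ < 1)
    (hS : DifferentiableAt ℝ S p.1) (hp : p ∈ imagingRegion κ₁ κ₂ C S) (hcurl : curl2 S p.1 = 0)
    (hcross : cross2v (S p.1) (grad2 (fun y ↦ norm2 (S y) ^ 2) p.1) = 0) :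
    IsFrobeniusIntegrableAt (imagingFactor κ₁ κ₂ C S) (fun y ↦ dot2CLM (S y)) p := by
  have hslope : ContDiffAt ℝ 1
      (fun q : ℝ × ℝ ↦ lensSlope κ₁ κ₂ ((1 - κ₁ * κ₂) * q.1 + C) q.2) (p.2, norm2 (S p.1) ^ 2) :=
    contDiffAt_lensSlope hκ₁ hκ₂ hκ (by fun_prop) contDiffAt_snd hp.2.2
  have hσ : DifferentiableAt ℝ (fun y ↦ norm2 (S y) ^ 2) p.1 :=
    (contDiff_norm2_sq.differentiable one_ne_zero _).comp p.1 hS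
  exact isFrobeniusIntegrableAt_comp (isClosedFormAt_dot2CLM hS hcurl) hσ
    (hslope.differentiableAt one_ne_zero) (fderiv_mul_dot2CLM_comm hcross)

theorem isLensSolution_iff (hκ₁ : 1 < κ₁) (hκ₂ : -1 < κ₂) (hκ : κ₁ * κ₂ < 1)
    {U : Set (Fin 2 → ℝ)} (hU : IsOpen U) (hS : ∀ x ∈ U, ContDiffAt ℝ 1 S x)
    {u : (Fin 2 → ℝ) → ℝ} :
    IsLensSolution κ₁ κ₂ C S U x₀ δ u ↔ u x₀ = δ ∧
      (∀ x ∈ U, (x, u x) ∈ imagingRegion κ₁ κ₂ C S) ∧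
      IsPfaffSolutionOn (imagingForm κ₁ κ₂ C S) u U := by
  have hupper (y : ℝ) : y < -C / (1 - κ₁ * κ₂) ↔ (1 - κ₁ * κ₂) * y + C < 0 := by
    rw [lt_div_iff₀' (sub_pos.2 hκ), lt_neg_iff_add_neg]
  have hform (x : Fin 2 → ℝ) : imagingForm κ₁ κ₂ C S (x, u x) =
      dot2CLM (imagingFactor κ₁ κ₂ C S (x, u x) • S x) := (map_smul dot2CLM _ _).symm
  constructor
  · rintro ⟨hreg, hδ, heq, hrange⟩
    have hsolved {x : Fin 2 → ℝ} (hx : x ∈ U) :=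
      (lens_equation_iff hκ₁ hκ₂ hκ ((hupper _).1 (hrange x hx).2)).1 (heq x hx)
    refine ⟨hδ, fun x hx ↦ ⟨(hrange x hx).1, (hupper _).1 (hrange x hx).2, (hsolved hx).1⟩,
      fun x hx ↦ ?_⟩
    rw [hform, hasFDerivAt_dot2CLM_iff]
    exact ⟨(hreg.contDiffAt (hU.mem_nhds hx)).differentiableAt two_ne_zero, (hsolved hx).2⟩
  · rintro ⟨hδ, hmem, hu⟩
    have hreg : ContDiffOn ℝ (1 + 1) u U := by
      exact_mod_cast hu.contDiffOn_succ hU 1 fun x hx ↦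
        contDiffAt_imagingForm hκ₁ hκ₂ hκ (hS x hx) (hmem x hx)
    refine ⟨by rwa [one_add_one_eq_two] at hreg, hδ, fun x hx ↦ ?_,
      fun x hx ↦ ⟨(hmem x hx).1, (hupper _).2 (hmem x hx).2.1⟩⟩
    exact (lens_equation_iff hκ₁ hκ₂ hκ (hmem x hx).2.1).2
      ⟨(hmem x hx).2.2, (hasFDerivAt_dot2CLM_iff.1 (hform x ▸ hu x hx)).2⟩

theorem IsLensSolution.eqOn (hκ₁ : 1 < κ₁) (hκ₂ : -1 < κ₂) (hκ : κ₁ * κ₂ < 1)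
    {U : Set (Fin 2 → ℝ)} (hU : IsOpen U) (hUc : IsPreconnected U) (hx₀ : x₀ ∈ U)
    (hS : ∀ x ∈ U, ContDiffAt ℝ 1 S x) {u v : (Fin 2 → ℝ) → ℝ}
    (hu : IsLensSolution κ₁ κ₂ C S U x₀ δ u) (hv : IsLensSolution κ₁ κ₂ C S U x₀ δ v) :
    EqOn u v U := by
  rw [isLensSolution_iff hκ₁ hκ₂ hκ hU hS] at hu hv
  obtain ⟨hu₀, hmem, hu⟩ := hu
  obtain ⟨hv₀, -, hv⟩ := hv
  exact hu.eqOn_of_isPreconnected hv hU hUc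
    (fun x hx ↦ contDiffAt_imagingForm hκ₁ hκ₂ hκ (hS x hx) (hmem x hx)) hx₀ (hu₀.trans hv₀.symm)

theorem exists_eventually_hasFDerivAt_imagingForm (hκ₁ : 1 < κ₁) (hκ₂ : -1 < κ₂) (hκ : κ₁ * κ₂ < 1)
    (hS : ContDiffAt ℝ 1 S x₀) (hδ : (x₀, δ) ∈ imagingRegion κ₁ κ₂ C S)
    (hcond : ∀ᶠ x in 𝓝 x₀,
      curl2 S x = 0 ∧ cross2v (S x) (grad2 (fun y ↦ norm2 (S y) ^ 2) x) = 0) :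
    ∃ u : (Fin 2 → ℝ) → ℝ, u x₀ = δ ∧ ∀ᶠ x in 𝓝 x₀, (x, u x) ∈ imagingRegion κ₁ κ₂ C S ∧
      HasFDerivAt u (imagingForm κ₁ κ₂ C S (x, u x)) x := by
  have hregion : ∀ᶠ p in 𝓝 (x₀, δ), p ∈ imagingRegion κ₁ κ₂ C S :=
    imagingRegion_mem_nhds hS.continuousAt hδ
  have hint : ∀ᶠ p in 𝓝 (x₀, δ),
      IsFrobeniusIntegrableAt (imagingFactor κ₁ κ₂ C S) (fun y ↦ dot2CLM (S y)) p := by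
    have hfst : Tendsto Prod.fst (𝓝 (x₀, δ)) (𝓝 x₀) := continuousAt_fst
    filter_upwards [hregion, hfst.eventually (hS.eventually (by simp)), hfst.eventually hcond]
      with p hp hSp ⟨hcurl, hcross⟩
    exact isFrobeniusIntegrableAt_imagingFactor hκ₁ hκ₂ hκ (hSp.differentiableAt one_ne_zero) hp
      hcurl hcross
  obtain ⟨u, hu₀, hu⟩ := exists_hasFDerivAt_of_isFrobeniusIntegrableAt
    (contDiffAt_imagingFactor hκ₁ hκ₂ hκ hS hδ) (dot2CLM.contDiff.contDiffAt.comp x₀ hS) hint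
  refine ⟨u, hu₀, .and ?_ hu⟩
  have hgraph : ContinuousAt (fun x ↦ (x, u x)) x₀ :=
    continuousAt_id.prodMk hu.self_of_nhds.continuousAt
  exact hgraph.eventually (by simpa only [hu₀] using hregion)

theorem imaging_local_existence_uniqueness_general (hκ₁ : 1 < κ₁) (hκ₂ : -1 < κ₂)
    (hκ : κ₁ * κ₂ < 1) {Ω : Set (Fin 2 → ℝ)} (hΩ : Ω ∈ 𝓝 x₀) (hS : ContDiffAt ℝ 1 S x₀)
    (hcond : ∀ᶠ x in 𝓝 x₀,
      curl2 S x = 0 ∧ cross2v (S x) (grad2 (fun y ↦ norm2 (S y) ^ 2) x) = 0)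
    (hδ₀ : 0 < δ)
    (hδ : δ < (1 - κ₁ * κ₂)⁻¹ * (-C - κ₁ * (κ₁ - κ₂) / √(κ₁ ^ 2 - 1) * norm2 (S x₀))) :
    ∃ U : Set (Fin 2 → ℝ), IsOpen U ∧ x₀ ∈ U ∧ U ⊆ Ω ∧
      ∃ u : (Fin 2 → ℝ) → ℝ, IsLensSolution κ₁ κ₂ C S U x₀ δ u ∧
        ∀ u' : (Fin 2 → ℝ) → ℝ, IsLensSolution κ₁ κ₂ C S U x₀ δ u' → EqOn u' u U := by
  obtain ⟨u, hu₀, hu⟩ := exists_eventually_hasFDerivAt_imagingForm hκ₁ hκ₂ hκ hS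
    (mem_imagingRegion_of_lt hκ₁ hκ hδ₀ hδ) hcond
  obtain ⟨r, hr, hball⟩ := eventually_nhds_iff_ball.1
    ((eventually_mem_set.2 hΩ).and ((hS.eventually (by simp)).and hu))
  have hSball : ∀ x ∈ ball x₀ r, ContDiffAt ℝ 1 S x := fun x hx ↦ (hball x hx).2.1
  have hsol : IsLensSolution κ₁ κ₂ C S (ball x₀ r) x₀ δ u :=
    (isLensSolution_iff hκ₁ hκ₂ hκ isOpen_ball hSball).2
      ⟨hu₀, fun x hx ↦ (hball x hx).2.2.1, fun x hx ↦ (hball x hx).2.2.2⟩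
  exact ⟨ball x₀ r, isOpen_ball, mem_ball_self hr, fun x hx ↦ (hball x hx).1, u, hsol,
    fun u' hu' ↦ hu'.eqOn hκ₁ hκ₂ hκ isOpen_ball (convex_ball x₀ r).isPreconnected
      (mem_ball_self hr) hSball hsol⟩

end ImagingSystem

/-- Theorem 6.1. Local existence and uniqueness of the lower lens
surface for the imaging problem when `n₁ > n₃`. -/
theorem imaging_local_existence_uniqueness (κ1 κ2 C : ℝ)
    (hκ1 : 1 < κ1) (hκ2 : 0 < κ2) (hκ2' : κ2 < 1) (hκκ : κ1 * κ2 < 1) (hC : C < 0)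
    (Ω : Set (Fin 2 → ℝ)) (hΩ : IsOpen Ω) (hsc : SimplyConnectedSpace Ω)
    (x0 : Fin 2 → ℝ) (hx0 : x0 ∈ Ω)
    (S : (Fin 2 → ℝ) → (Fin 2 → ℝ)) (hS : ContDiffOn ℝ 1 S Ω)
    (hbound : norm2 (S x0) < -C * Real.sqrt (κ1 ^ 2 - 1) / (κ1 * (κ1 - κ2)))
    (hcond : ∀ᶠ x in nhds x0,
        curl2 S x = 0 ∧ cross2v (S x) (grad2 (fun y => norm2 (S y) ^ 2) x) = 0) :
    ∀ δ0 : ℝ, 0 < δ0 →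
      δ0 < (1 - κ1 * κ2)⁻¹ *
          (-C - κ1 * (κ1 - κ2) / Real.sqrt (κ1 ^ 2 - 1) * norm2 (S x0)) →
      ∃ U : Set (Fin 2 → ℝ), IsOpen U ∧ x0 ∈ U ∧ U ⊆ Ω ∧
        ∃ u : (Fin 2 → ℝ) → ℝ, IsLensSolution κ1 κ2 C S U x0 δ0 u ∧
          ∀ u' : (Fin 2 → ℝ) → ℝ, IsLensSolution κ1 κ2 C S U x0 δ0 u' →
            Set.EqOn u' u U :=
  fun _ hδ0 hδ ↦ imaging_local_existence_uniqueness_general hκ1 (by linarith) hκκ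
    (hΩ.mem_nhds hx0) (hS.contDiffAt (hΩ.mem_nhds hx0)) hcond hδ0 hδ
end

section
/- (Theorem 8.1, analytic form.) Let $\Omega\subseteq\mathbb{R}^2$ be open and simply connected, let $S:\Omega\to\mathbb{R}^2$ be $C^1$, and let $C\ne 0$ be a constant. Then: (i) there exists a $C^2$ function $u:\Omega\to\mathbb{R}$ with $\nabla u = S/C$ on $\Omega$ if and only if $\mathrm{curl}\,S = 0$ on $\Omega$; and (ii) for any such $u$, defining $m_1(x) = \left(\dfrac{2\nabla u(x)}{1+|\nabla u(x)|^2},\; 1-\dfrac{2}{1+|\nabla u(x)|^2}\right)$, $d(x) = \dfrac{C}{1-m_1(x)\cdot(0,0,1)}$, and $f(x)=(x,u(x))+d(x)\,m_1(x)$, the first two components of $f$ satisfy $(f_1(x),f_2(x)) = x + S x$ for all $x\in\Omega$. -/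
/-!
If `∇u = V` then `curl V = 0` because second derivatives commute. Conversely, a curl-free field has
primitives on balls, and two of them differ by a locally constant function where both are defined.
The local primitives and their translates by constants are therefore the local sections of a
covering space of `Ω`. As `Ω` is simply connected, this covering has a global section, which is a
potential.

The reflected direction `m₁` is the inverse stereographic projection of `∇u` from the north pole
`(0, 0, 1)`, so dividing its horizontal part by `1 - m₁ · (0, 0, 1)` gives back `∇u`. The horizontal
displacement of the ray is thus `C ∇u = S`.
-/

open Filter Set Topology

section GluingPrimitives

variable {ι X : Type*} [TopologicalSpace X]

theorem exists_section_of_discreteTopology [SimplyConnectedSpace X] [LocallyPathConnectedSpace X]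
    {F : Type*} [TopologicalSpace F] [DiscreteTopology F] [Nonempty F]
    (Z : FiberBundleCore ι X F) :
    ∃ s : X → F, ∀ i,
      ContinuousOn (fun x => Z.coordChange (Z.indexAt x) i x (s x)) (Z.baseSet i) := by
  obtain ⟨x₀⟩ : Nonempty X := inferInstance
  obtain ⟨v₀⟩ : Nonempty F := inferInstance
  have hcov : IsCoveringMap (Bundle.TotalSpace.proj : Z.TotalSpace → X) :=
    FiberBundle.isCoveringMap (F := F) (E := Z.Fiber)
  obtain ⟨s, ⟨-, hs⟩, -⟩ :=
    hcov.existsUnique_continuousMap_lifts (.id X) x₀ (⟨x₀, v₀⟩ : Z.TotalSpace) rfl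
  have hproj (x : X) : (s x).proj = x := congrFun hs x
  refine ⟨fun x => (s x).snd, fun i => ?_⟩
  have hcoord : ContinuousOn (fun x => (Z.localTriv i (s x)).2) (Z.baseSet i) :=
    continuous_snd.comp_continuousOn <|
      (Z.localTriv i).continuousOn.comp s.continuous.continuousOn fun x hx => by
        simpa [hproj x] using hx
  exact hcoord.congr fun x _ =>
    congrArg (fun b => Z.coordChange (Z.indexAt b) i b (s x).snd) (hproj x).symm

/-- The fibre bundle with discrete fibre `G` whose sections are the functions differing from each
`f i` by a locally constant function on `U i`; such a function `u` has coordinate `u - f i`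
over `U i`. -/
def differenceBundleCore {G : Type*} [AddGroup G] [TopologicalSpace G] [DiscreteTopology G]
    (U : ι → Set X) (hU : ∀ i, IsOpen (U i)) (indexAt : X → ι) (hmem : ∀ x, x ∈ U (indexAt x))
    (f : ι → X → G) (hf : ∀ i j, ContinuousOn (fun x => f i x - f j x) (U i ∩ U j)) :
    FiberBundleCore ι X G where
  baseSet := U
  isOpen_baseSet := hU
  indexAt := indexAt
  mem_baseSet_at := hmem
  coordChange i j x v := v + (f i x - f j x)
  coordChange_self i x _ v := by rw [sub_self, add_zero]
  continuousOn_coordChange i j :=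
    continuous_of_discreteTopology (f := fun p : G × G => p.1 + p.2) |>.comp_continuousOn <|
      continuousOn_snd.prodMk <| (hf i j).comp continuousOn_fst fun _ hp => hp.1
  coordChange_comp i j k x _ v := by rw [add_assoc, sub_add_sub_cancel]

theorem exists_eventually_sub_eq [SimplyConnectedSpace X] [LocallyPathConnectedSpace X]
    {G : Type*} [AddGroup G] {U : ι → Set X} (hU : ∀ i, IsOpen (U i)) (hcover : ∀ x, ∃ i, x ∈ U i)
    {f : ι → X → G}
    (hf : ∀ i j, ∀ x ∈ U i ∩ U j, ∀ᶠ y in 𝓝 x, f i y - f j y = f i x - f j x) :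
    ∃ u : X → G, ∀ i, ∀ x ∈ U i, ∀ᶠ y in 𝓝 x, u y - f i y = u x - f i x := by
  choose indexAt hmem using hcover
  let : TopologicalSpace G := ⊥
  have : DiscreteTopology G := ⟨rfl⟩
  have continuousAt_iff (g : X → G) (x : X) : ContinuousAt g x ↔ ∀ᶠ y in 𝓝 x, g y = g x := by
    rw [ContinuousAt, nhds_discrete G, tendsto_pure]
  obtain ⟨s, hs⟩ := exists_section_of_discreteTopology <|
    differenceBundleCore U hU indexAt hmem f fun i j x hx =>
      ((continuousAt_iff _ x).2 (hf i j x hx)).continuousWithinAt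
  refine ⟨fun x => s x + f (indexAt x) x, fun i x hx => ?_⟩
  simp only [add_sub_assoc]
  exact (continuousAt_iff _ x).1 ((hs i).continuousAt ((hU i).mem_nhds hx))

end GluingPrimitives

section PoincareLemma

variable {𝕜 E F : Type*} [RCLike 𝕜] [NormedAddCommGroup E] [NormedSpace 𝕜 E]
  [NormedAddCommGroup F] [NormedSpace 𝕜 F] {s : Set E} {ω : E → E →L[𝕜] F}

theorem eventually_sub_eq_of_hasFDerivAt [NormedSpace ℝ E] (hs : IsOpen s) {f g : E → F}
    (hf : ∀ x ∈ s, HasFDerivAt f (ω x) x) (hg : ∀ x ∈ s, HasFDerivAt g (ω x) x)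
    {x : E} (hx : x ∈ s) :
    ∀ᶠ y in 𝓝 x, f y - g y = f x - g x := by
  have hsub (y : E) (hy : y ∈ s) : HasFDerivAt (f - g) (0 : E →L[𝕜] F) y := by
    simpa only [sub_self] using (hf y hy).sub (hg y hy)
  have hopen : IsOpen (s ∩ (f - g) ⁻¹' {f x - g x}) :=
    hs.isOpen_inter_preimage_of_fderiv_eq_zero (𝕜 := 𝕜)
      (fun y hy => (hsub y hy).differentiableAt.differentiableWithinAt)
      (fun y hy => (hsub y hy).fderiv) _
  filter_upwards [hopen.mem_nhds ⟨hx, rfl⟩] with y hy using hy.2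

theorem exists_hasFDerivAt_of_local [NormedSpace ℝ E] (hs : IsOpen s) [SimplyConnectedSpace s]
    (hloc : ∀ a ∈ s, ∃ f : E → F, ∀ᶠ x in 𝓝 a, HasFDerivAt f (ω x) x) :
    ∃ u : E → F, ∀ x ∈ s, HasFDerivAt u (ω x) x := by
  have := hs.locallyPathConnectedSpace
  choose f hf using fun a : s => hloc a a.2
  choose V hfV hV haV using fun a : s => eventually_nhds_iff.1 (hf a)
  obtain ⟨u, hu⟩ := exists_eventually_sub_eq (X := s) (U := fun a => Subtype.val ⁻¹' V a)
    (f := fun a x => f a x) (fun a => (hV a).preimage continuous_subtype_val)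
    (fun a => ⟨a, haV a⟩) fun a b x hx =>
      continuousAt_subtype_val.eventually <| eventually_sub_eq_of_hasFDerivAt
        ((hV a).inter (hV b)) (fun y hy => hfV a y hy.1) (fun y hy => hfV b y hy.2) hx
  have extend_coe (y : s) : Function.extend Subtype.val u 0 (y : E) = u y :=
    Subtype.val_injective.extend_apply u 0 y
  refine ⟨Function.extend Subtype.val u 0, fun a ha => ?_⟩
  refine ((hf ⟨a, ha⟩).self_of_nhds.add_const (u ⟨a, ha⟩ - f ⟨a, ha⟩ a)).congr_of_eventuallyEq ?_
  rw [← map_nhds_subtype_coe_eq_nhds ha (hs.mem_nhds ha), EventuallyEq, eventually_map]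
  filter_upwards [hu ⟨a, ha⟩ ⟨a, ha⟩ (haV _)] with y hy
  rw [extend_coe, ← hy, add_sub_cancel]

theorem exists_hasFDerivAt_of_fderiv_symmetric [NormedSpace ℝ E] [NormedSpace ℝ F]
    [CompleteSpace F] (hs : IsOpen s) [SimplyConnectedSpace s] (hω : DifferentiableOn ℝ ω s)
    (hsymm : ∀ a ∈ s, ∀ v w, fderiv ℝ ω a v w = fderiv ℝ ω a w v) :
    ∃ u : E → F, ∀ x ∈ s, HasFDerivAt u (ω x) x := by
  refine exists_hasFDerivAt_of_local hs fun a ha => ?_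
  obtain ⟨r, hr, hball⟩ := Metric.isOpen_iff.1 hs a ha
  obtain ⟨f, hf⟩ := (convex_ball a r).exists_forall_hasFDerivAt_of_fderiv_symmetric
    Metric.isOpen_ball (hω.mono hball) fun b hb => hsymm b (hball hb)
  exact ⟨f, eventually_of_mem (Metric.ball_mem_nhds a hr) hf⟩

theorem contDiffOn_succ_of_hasFDerivAt {n : ℕ∞} {u : E → F} (hs : IsOpen s)
    (hu : ∀ x ∈ s, HasFDerivAt u (ω x) x) (hω : ContDiffOn 𝕜 n ω s) :
    ContDiffOn 𝕜 (n + 1) u s :=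
  (contDiffOn_succ_iff_fderiv_of_isOpen hs).2
    ⟨fun x hx => (hu x hx).differentiableAt.differentiableWithinAt, by simp,
      hω.congr fun x hx => (hu x hx).fderiv⟩

end PoincareLemma

section PlaneFields

variable {V : (Fin 2 → ℝ) → Fin 2 → ℝ} {u : (Fin 2 → ℝ) → ℝ} {x : Fin 2 → ℝ}
  {Ω : Set (Fin 2 → ℝ)}

/-- The 1-form `V₁ dx₁ + V₂ dx₂` of a plane field `V`, through which statements about gradients and
curls become statements about Fréchet derivatives. -/
noncomputable def oneForm (V : (Fin 2 → ℝ) → Fin 2 → ℝ) (x : Fin 2 → ℝ) : (Fin 2 → ℝ) →L[ℝ] ℝ :=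
  (ContinuousLinearEquiv.piRing (𝕜 := ℝ) (Fin 2)).symm (V x)

theorem oneForm_apply (V : (Fin 2 → ℝ) → Fin 2 → ℝ) (x v : Fin 2 → ℝ) :
    oneForm V x v = v 0 * V x 0 + v 1 * V x 1 :=
  (LinearEquiv.piRing_symm_apply ℝ (V x) v).trans (Fin.sum_univ_two _)

theorem grad2_eq_iff_fderiv_eq_oneForm : grad2 u x = V x ↔ fderiv ℝ u x = oneForm V x := by
  have grad2_eq : grad2 u x = ContinuousLinearEquiv.piRing (𝕜 := ℝ) (Fin 2) (fderiv ℝ u x) := by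
    ext i
    fin_cases i <;> rfl
  rw [grad2_eq, oneForm, ContinuousLinearEquiv.eq_symm_apply]

theorem fderiv_apply_eq_pd (u : (Fin 2 → ℝ) → ℝ) (x v : Fin 2 → ℝ) :
    fderiv ℝ u x v = v 0 * pd 0 u x + v 1 * pd 1 u x := by
  rw [grad2_eq_iff_fderiv_eq_oneForm.1 (rfl : grad2 u x = grad2 u x), oneForm_apply]
  rfl

theorem fderiv_oneForm_apply (hV : DifferentiableAt ℝ V x) (v w : Fin 2 → ℝ) :
    fderiv ℝ (oneForm V) x v w =
      w 0 * fderiv ℝ (fun y => V y 0) x v + w 1 * fderiv ℝ (fun y => V y 1) x v := by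
  have fderiv_eq : fderiv ℝ (oneForm V) x v = oneForm (fun _ => fderiv ℝ V x v) x :=
    DFunLike.congr_fun (ContinuousLinearEquiv.piRing (𝕜 := ℝ) (E := ℝ) (Fin 2)).symm.comp_fderiv v
  rw [fderiv_eq, oneForm_apply, fderiv_apply hV, fderiv_apply hV]
  rfl

theorem fderiv_oneForm_apply_sub (hV : DifferentiableAt ℝ V x) (v w : Fin 2 → ℝ) :
    fderiv ℝ (oneForm V) x v w - fderiv ℝ (oneForm V) x w v = curl2 V x * cross2v v w := by
  simp only [fderiv_oneForm_apply hV, fderiv_apply_eq_pd, curl2, cross2v]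
  ring

theorem curl2_eq_zero_iff_fderiv_oneForm_symmetric (hV : DifferentiableAt ℝ V x) :
    curl2 V x = 0 ↔ ∀ v w, fderiv ℝ (oneForm V) x v w = fderiv ℝ (oneForm V) x w v := by
  refine ⟨fun hcurl v w => ?_, fun hsymm => ?_⟩
  · rw [← sub_eq_zero, fderiv_oneForm_apply_sub hV, hcurl, zero_mul]
  · have hsub := fderiv_oneForm_apply_sub hV (Pi.single 0 1) (Pi.single 1 1)
    simpa [hsymm _ (Pi.single 1 1), cross2v] using hsub.symm

theorem curl2_const_smul (c : ℝ) (V : (Fin 2 → ℝ) → Fin 2 → ℝ) (x : Fin 2 → ℝ) :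
    curl2 (c • V) x = c * curl2 V x := by
  have pd_const_smul (i j : Fin 2) :
      pd i (fun y => (c • V) y j) x = c * pd i (fun y => V y j) x := by
    have hsmul : (fun y => (c • V) y j) = c • fun y => V y j := rfl
    rw [pd, hsmul, fderiv_const_smul_field]
    rfl
  rw [curl2, pd_const_smul, pd_const_smul, curl2, mul_sub]

theorem exists_grad2_eq_iff_curl2_eq_zero (hΩ : IsOpen Ω) [SimplyConnectedSpace Ω]
    (hV : ContDiffOn ℝ 1 V Ω) :
    (∃ u, ContDiffOn ℝ 2 u Ω ∧ ∀ x ∈ Ω, grad2 u x = V x) ↔ ∀ x ∈ Ω, curl2 V x = 0 := by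
  have hV_at (x) (hx : x ∈ Ω) : DifferentiableAt ℝ V x :=
    (hV.differentiableOn one_ne_zero).differentiableAt (hΩ.mem_nhds hx)
  have hform : ContDiffOn ℝ 1 (oneForm V) Ω :=
    (ContinuousLinearEquiv.piRing (𝕜 := ℝ) (E := ℝ) (Fin 2)).symm.contDiff.comp_contDiffOn hV
  have hform_diff : DifferentiableOn ℝ (oneForm V) Ω := hform.differentiableOn one_ne_zero
  constructor
  · rintro ⟨u, hu, hgrad⟩ x hx
    have hderiv (y) (hy : y ∈ Ω) : HasFDerivAt u (oneForm V y) y := by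
      rw [← grad2_eq_iff_fderiv_eq_oneForm.1 (hgrad y hy)]
      exact (hu.differentiableOn two_ne_zero).hasFDerivAt (hΩ.mem_nhds hy)
    refine (curl2_eq_zero_iff_fderiv_oneForm_symmetric (hV_at x hx)).2 ?_
    exact second_derivative_symmetric_of_eventually
      (eventually_of_mem (hΩ.mem_nhds hx) hderiv)
      (hform_diff.hasFDerivAt (hΩ.mem_nhds hx))
  · intro hcurl
    obtain ⟨u, hu⟩ := exists_hasFDerivAt_of_fderiv_symmetric hΩ hform_diff fun x hx =>
      (curl2_eq_zero_iff_fderiv_oneForm_symmetric (hV_at x hx)).1 (hcurl x hx)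
    refine ⟨u, ?_, fun x hx => grad2_eq_iff_fderiv_eq_oneForm.2 (hu x hx).fderiv⟩
    simpa [one_add_one_eq_two] using contDiffOn_succ_of_hasFDerivAt (n := 1) hΩ hu hform

end PlaneFields

section Reflection

/-- The direction into which the mirror with gradient `p` reflects the vertical ray `(0, 0, 1)`:
the field `m₁` of the imaging problem at `x` is this vector for `p = ∇u x`. -/
noncomputable def reflectedDirection (p : Fin 2 → ℝ) : Fin 3 → ℝ :=
  ![2 * p 0 / (1 + norm2 p ^ 2), 2 * p 1 / (1 + norm2 p ^ 2), 1 - 2 / (1 + norm2 p ^ 2)]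

theorem one_sub_dot3_reflectedDirection (p : Fin 2 → ℝ) :
    1 - dot3 (reflectedDirection p) ![0, 0, 1] = 2 / (1 + norm2 p ^ 2) := by
  simp [dot3, reflectedDirection]

theorem reflectedDirection_castSucc (p : Fin 2 → ℝ) (i : Fin 2) :
    reflectedDirection p i.castSucc = 2 / (1 + norm2 p ^ 2) * p i := by
  fin_cases i <;> simp [reflectedDirection, div_mul_eq_mul_div]

theorem div_one_sub_dot3_mul_reflectedDirection (C : ℝ) (p : Fin 2 → ℝ) (i : Fin 2) :
    C / (1 - dot3 (reflectedDirection p) ![0, 0, 1]) * reflectedDirection p i.castSucc =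
      C * p i := by
  have hpos : 0 < 2 / (1 + norm2 p ^ 2) := by positivity
  rw [one_sub_dot3_reflectedDirection, reflectedDirection_castSucc, ← mul_assoc,
    div_mul_cancel₀ _ hpos.ne']

end Reflection

/-- Theorem 8.1, analytic form. (i) A `C²` potential `u` with
`∇u = S/C` exists on the simply connected domain `Ω` iff `curl S = 0`; (ii) for any such
`u` the two-mirror construction sends `(x,0)` to the point above `x + Sx`. -/
theorem two_mirror_imaging (C : ℝ) (hC : C ≠ 0)
    (Ω : Set (Fin 2 → ℝ)) (hΩ : IsOpen Ω) (hsc : SimplyConnectedSpace Ω)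
    (S : (Fin 2 → ℝ) → (Fin 2 → ℝ)) (hS : ContDiffOn ℝ 1 S Ω) :
    ((∃ u : (Fin 2 → ℝ) → ℝ, ContDiffOn ℝ 2 u Ω ∧ ∀ x ∈ Ω, grad2 u x = C⁻¹ • S x) ↔
      ∀ x ∈ Ω, curl2 S x = 0) ∧
    ∀ u : (Fin 2 → ℝ) → ℝ, ContDiffOn ℝ 2 u Ω →
      (∀ x ∈ Ω, grad2 u x = C⁻¹ • S x) →
      ∀ m1 : (Fin 2 → ℝ) → (Fin 3 → ℝ),
        (∀ x, m1 x = ![2 * grad2 u x 0 / (1 + norm2 (grad2 u x) ^ 2),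
            2 * grad2 u x 1 / (1 + norm2 (grad2 u x) ^ 2),
            1 - 2 / (1 + norm2 (grad2 u x) ^ 2)]) →
        ∀ d : (Fin 2 → ℝ) → ℝ,
          (∀ x, d x = C / (1 - dot3 (m1 x) ![0, 0, 1])) →
          ∀ f : (Fin 2 → ℝ) → (Fin 3 → ℝ),
            (∀ x, f x = ![x 0, x 1, u x] + d x • m1 x) →
            ∀ x ∈ Ω, f x 0 = x 0 + S x 0 ∧ f x 1 = x 1 + S x 1 := by
  refine ⟨?_, fun u _ hgrad m1 hm1 d hd f hf x hx => ?_⟩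
  · have hcurl (x) : curl2 (C⁻¹ • S) x = 0 ↔ curl2 S x = 0 := by simp [curl2_const_smul, hC]
    exact (exists_grad2_eq_iff_curl2_eq_zero hΩ (hS.const_smul C⁻¹)).trans
      (forall₂_congr fun x _ => hcurl x)
  · have hm1x : m1 x = reflectedDirection (grad2 u x) := hm1 x
    have displacement (i : Fin 2) : d x * m1 x i.castSucc = S x i := by
      rw [hd, hm1x, div_one_sub_dot3_mul_reflectedDirection, hgrad x hx, Pi.smul_apply,
        smul_eq_mul, mul_inv_cancel_left₀ hC]
    rw [hf]
    exact ⟨congrArg (x 0 + ·) (displacement 0), congrArg (x 1 + ·) (displacement 1)⟩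
end
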